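/- (Theorem 2: optimal scales and variance.) Consider data x¹,…,x^N ∈ ℝ^D, a matrix W̃ ∈ ℝ^{D×H}, and Gaussian variational distributions q_n = N(ν^{(n)}, T^{(n)}) on ℝ^H realized as laws of ν^{(n)} + A_n·u with u standard Gaussian and T^{(n)} = A_n·A_nᵀ, with T^{(n)}_{hh} > 0 for all n, h. Define the ELBO ℒ(λ,σ²) = (1/N)·Σ_n ∫ q_n(z)·[ log p_{σ²}(x^{(n)}|z) + log p_λ(z) − log q_n(z) ] dz for λ ∈ (0,∞)^H and σ² > 0. Then the values σ²_opt = (1/(N·D))·Σ_{n=1}^N [ tr(W̃ᵀ·W̃·T^{(n)}) + ‖W̃·ν^{(n)} − x^{(n)}‖² ] and, for each h, λ_h^opt = (1/N)·Σ_{n=1}^N √(T^{(n)}_{hh})·M( ν_h^{(n)} / √(T^{(n)}_{hh}) ) are the unique values of σ² > 0 and λ ∈ (0,∞)^H at which all partial derivatives of ℒ with respect to σ² and with respect to λ₁,…,λ_H vanish. -/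

import Mathlib

open MeasureTheory ProbabilityTheory Matrix Real

/-- The error function `erf x = (2/sqrt pi) * integral_0^x exp(-t^2) dt`. -/
noncomputable def erf (x : ℝ) : ℝ :=
  (2 / Real.sqrt Real.pi) * ∫ t in (0:ℝ)..x, Real.exp (-t ^ 2)

/-- `M a = sqrt (2/pi) * exp (-a^2/2) + a * erf (a/sqrt 2)`. -/
noncomputable def Mfun (a : ℝ) : ℝ :=
  Real.sqrt (2 / Real.pi) * Real.exp (-a ^ 2 / 2) + a * erf (a / Real.sqrt 2)

/-- Factorized Laplace prior density with scales `lam`. -/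
noncomputable def laplacePdf {H : ℕ} (lam : Fin H → ℝ) (z : Fin H → ℝ) : ℝ :=
  ∏ h, (1 / (2 * lam h)) * Real.exp (-|z h| / lam h)

/-- Gaussian observation density `p_s(x|z) = (2*pi*s)^(-D/2) * exp(-||x - W z||^2/(2*s))`. -/
noncomputable def gaussObsPdf {D H : ℕ} (W : Matrix (Fin D) (Fin H) ℝ) (s : ℝ)
    (x : Fin D → ℝ) (z : Fin H → ℝ) : ℝ :=
  (2 * Real.pi * s) ^ (-(D : ℝ) / 2) *
    Real.exp (-(∑ i, (x i - W.mulVec z i) ^ 2) / (2 * s))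

/-- The law of a random vector in `R^H` with independent standard Gaussian coordinates. -/
noncomputable def stdGaussianPi (H : ℕ) : Measure (Fin H → ℝ) :=
  Measure.pi fun _ => gaussianReal 0 1

lemma meas_lin {H : ℕ} (c : ℝ) (b : Fin H → ℝ) :
    Measurable (fun u : Fin H → ℝ => c + ∑ k, b k * u k) := by fun_prop

lemma law_lin {H : ℕ} (c : ℝ) (b : Fin H → ℝ) :
    (stdGaussianPi H).map (fun u => c + ∑ k, b k * u k)
      = gaussianReal c (Real.toNNReal (∑ k, b k ^ 2)) := by
  have : IsProbabilityMeasure (stdGaussianPi H) := by unfold stdGaussianPi; infer_instance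
  have hm : Measurable (fun u : Fin H → ℝ => c + ∑ k, b k * u k) := by fun_prop
  have := Measure.isProbabilityMeasure_map (μ := stdGaussianPi H) hm.aemeasurable
  apply Measure.ext_of_charFun
  ext t
  rw [charFun_gaussianReal, charFun_apply_real, integral_map hm.aemeasurable (by fun_prop)]
  have h1 : ∀ u : Fin H → ℝ, Complex.exp (t * ((c + ∑ k, b k * u k : ℝ) : ℂ) * Complex.I)
      = Complex.exp (t * c * Complex.I)
        * ∏ k, Complex.exp (((t * b k : ℝ) : ℂ) * (u k : ℂ) * Complex.I) := by
    intro u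
    rw [← Complex.exp_sum, ← Complex.exp_add]
    congr 1
    push_cast
    rw [mul_add, add_mul, Finset.mul_sum, Finset.sum_mul]
    congr 1
    exact Finset.sum_congr rfl fun k _ => by ring
  simp_rw [h1]
  rw [integral_const_mul]
  unfold stdGaussianPi
  rw [integral_fintype_prod_eq_prod (𝕜 := ℂ) (f := fun k (x : ℝ) =>
    Complex.exp (((t * b k : ℝ) : ℂ) * (x : ℂ) * Complex.I))]
  simp_rw [← charFun_apply_real, charFun_gaussianReal]
  rw [← Complex.exp_sum, ← Complex.exp_add]
  congr 1
  have hv : ((Real.toNNReal (∑ k, b k ^ 2) : NNReal) : ℝ) = ∑ k, b k ^ 2 :=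
    Real.coe_toNNReal _ (Finset.sum_nonneg fun k _ => sq_nonneg _)
  rw [hv]
  push_cast
  rw [sub_eq_add_neg, Finset.sum_mul, Finset.sum_div, ← Finset.sum_neg_distrib]
  congr 1
  exact Finset.sum_congr rfl fun k _ => by ring

lemma hasDerivAt_erf (x : ℝ) :
    HasDerivAt erf ((2 / Real.sqrt Real.pi) * Real.exp (-x ^ 2)) x := by
  unfold erf
  have hc : Continuous fun t : ℝ => Real.exp (-t ^ 2) := by fun_prop
  exact (intervalIntegral.integral_hasDerivAt_right (hc.intervalIntegrable _ _)
    (hc.stronglyMeasurableAtFilter _ _) hc.continuousAt).const_mul _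

lemma erf_neg (x : ℝ) : erf (-x) = - erf x := by
  unfold erf
  have := intervalIntegral.integral_comp_neg (a := 0) (b := x) (fun t : ℝ => Real.exp (-t ^ 2))
  simp only [neg_sq, neg_zero] at this
  rw [intervalIntegral.integral_symm, ← this]
  ring

lemma erf_top : ∃ L : ℝ, Filter.Tendsto erf Filter.atTop (nhds L) := by
  refine ⟨(2 / Real.sqrt Real.pi) * ∫ t in Set.Ioi (0:ℝ), Real.exp (-t ^ 2), ?_⟩
  unfold erf
  have hi : Integrable (fun t : ℝ => Real.exp (-t ^ 2)) := by
    simpa using integrable_exp_neg_mul_sq (b := 1) one_pos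
  exact (intervalIntegral_tendsto_integral_Ioi 0 hi.integrableOn Filter.tendsto_id).const_mul _

lemma std_abs (a : ℝ) : ∫ u, |a + u| ∂(gaussianReal 0 1) = Mfun a := by
  have hs2 : 0 < Real.sqrt 2 := by positivity
  have hsp : 0 < Real.sqrt Real.pi := by positivity
  have h2p : Real.sqrt (2 * Real.pi) = Real.sqrt 2 * Real.sqrt Real.pi :=
    Real.sqrt_mul (by norm_num) _
  have hss : Real.sqrt 2 * Real.sqrt 2 = 2 := Real.mul_self_sqrt (by norm_num)
  set φ : ℝ → ℝ := fun u => (Real.sqrt (2 * Real.pi))⁻¹ * Real.exp (-u ^ 2 / 2) with hφ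
  have hpdf : ∀ u, gaussianPDFReal 0 1 u = φ u := by
    intro u; simp [gaussianPDFReal, hφ]
  set F : ℝ → ℝ := fun u => - φ u + a / 2 * erf (u / Real.sqrt 2) with hF
  have hd : ∀ u, HasDerivAt F ((a + u) * φ u) u := by
    intro u
    have h1 : HasDerivAt φ ((Real.sqrt (2 * Real.pi))⁻¹ * (Real.exp (-u ^ 2 / 2) * (-u))) u := by
      apply HasDerivAt.const_mul
      apply HasDerivAt.exp
      have := ((hasDerivAt_pow 2 u).neg).div_const 2
      refine this.congr_deriv ?_
      norm_num; ring
    have h2 := (hasDerivAt_erf (u / Real.sqrt 2)).comp u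
      ((hasDerivAt_id u).div_const (Real.sqrt 2))
    have h3 := h1.neg.add (h2.const_mul (a / 2))
    refine h3.congr_deriv ?_
    have : -(u / Real.sqrt 2) ^ 2 = - u ^ 2 / 2 := by
      rw [div_pow, Real.sq_sqrt (by norm_num)]; ring
    rw [this, h2p]
    simp only [hφ, h2p]
    field_simp
    ring
  have hint : Integrable (fun u => (a + u) * φ u) := by
    have e1 : Integrable φ := by
      have := integrable_gaussianPDFReal 0 1
      simpa [funext hpdf] using this
    have e2 : Integrable (fun u => u * φ u) := by
      have := (integrable_mul_exp_neg_mul_sq (b := 1/2) (by norm_num)).const_mul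
        (Real.sqrt (2 * Real.pi))⁻¹
      convert this using 2 with u
      simp only [hφ]
      rw [show -u ^ 2 / 2 = -(1/2) * u ^ 2 by ring]
      ring
    refine ((e1.const_mul a).add e2).congr (Filter.Eventually.of_forall fun u => ?_)
    simp only [Pi.add_apply]; ring
  obtain ⟨L, hL⟩ := erf_top
  have hφ0 : Filter.Tendsto φ Filter.atTop (nhds 0) := by
    have : Filter.Tendsto (fun u : ℝ => Real.exp (-u ^ 2 / 2)) Filter.atTop (nhds 0) := by
      apply Real.tendsto_exp_atBot.comp
      apply Filter.Tendsto.atBot_div_const (by norm_num)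
      exact Filter.tendsto_neg_atTop_atBot.comp (Filter.tendsto_pow_atTop (by norm_num))
    have h := this.const_mul (Real.sqrt (2 * Real.pi))⁻¹
    rw [mul_zero] at h
    exact h
  have hE : Filter.Tendsto (fun u => erf (u / Real.sqrt 2)) Filter.atTop (nhds L) :=
    hL.comp (Filter.tendsto_id.atTop_div_const hs2)
  have hφe : ∀ u, φ (-u) = φ u := by intro u; simp [hφ]
  have hFtop : Filter.Tendsto F Filter.atTop (nhds (a / 2 * L)) := by
    simpa using hφ0.neg.add (hE.const_mul (a / 2))
  have hFbot : Filter.Tendsto F Filter.atBot (nhds (-(a / 2 * L))) := by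
    have h1 : Filter.Tendsto (fun u => - φ u + a / 2 * (- erf (u / Real.sqrt 2)))
        Filter.atTop (nhds (-(a / 2 * L))) := by
      simpa using hφ0.neg.add (hE.neg.const_mul (a / 2))
    have h2 := h1.comp Filter.tendsto_neg_atBot_atTop
    refine h2.congr fun u => ?_
    simp only [Function.comp, hφe, hF, neg_div, erf_neg, neg_neg]
  have hI1 := integral_Ioi_of_hasDerivAt_of_tendsto' (a := -a) (fun u _ => hd u)
    hint.integrableOn hFtop
  have hI2 := integral_Iic_of_hasDerivAt_of_tendsto' (a := -a) (fun u _ => hd u)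
    hint.integrableOn hFbot
  rw [integral_gaussianReal_eq_integral_smul (by norm_num)]
  simp_rw [hpdf, smul_eq_mul]
  have habs : Integrable (fun u => φ u * |a + u|) := by
    convert hint.abs using 2 with u
    rw [abs_mul, abs_of_nonneg (a := φ u) (by simp only [hφ]; positivity), mul_comm]
  rw [← intervalIntegral.integral_Iic_add_Ioi (b := -a) habs.integrableOn habs.integrableOn]
  have hJ1 : ∫ u in Set.Ioi (-a), φ u * |a + u| = ∫ u in Set.Ioi (-a), (a + u) * φ u := by
    apply setIntegral_congr_fun measurableSet_Ioi
    intro u hu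
    simp only [Set.mem_Ioi] at hu
    simp only
    rw [abs_of_nonneg (by linarith)]; ring
  have hJ2 : ∫ u in Set.Iic (-a), φ u * |a + u| = - ∫ u in Set.Iic (-a), (a + u) * φ u := by
    rw [← integral_neg]
    apply setIntegral_congr_fun measurableSet_Iic
    intro u hu
    simp only [Set.mem_Iic] at hu
    simp only
    rw [abs_of_nonpos (by linarith)]; ring
  rw [hJ1, hJ2, hI1, hI2]
  simp only [hF, hφe, neg_div, erf_neg]
  unfold Mfun
  have : Real.sqrt (2 / Real.pi) = 2 * (Real.sqrt (2 * Real.pi))⁻¹ := by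
    rw [h2p, Real.sqrt_div (by norm_num)]
    field_simp
    linarith
  rw [this]
  simp only [hφ, neg_div]
  ring

lemma int_abs {H : ℕ} (c : ℝ) (b : Fin H → ℝ) :
    Integrable (fun u => |c + ∑ k, b k * u k|) (stdGaussianPi H) := by
  have h := (memLp_id_gaussianReal (μ := c) (v := Real.toNNReal (∑ k, b k ^ 2)) 1)
  rw [← law_lin c b] at h
  have h2 := (memLp_map_measure_iff (by fun_prop) (meas_lin c b).aemeasurable).1 h
  exact ((memLp_one_iff_integrable.1 (by simpa using h2)).abs)

lemma int_sq {H : ℕ} (c : ℝ) (b : Fin H → ℝ) :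
    Integrable (fun u => (c + ∑ k, b k * u k) ^ 2) (stdGaussianPi H) := by
  have h := (memLp_id_gaussianReal (μ := c) (v := Real.toNNReal (∑ k, b k ^ 2)) 2)
  rw [← law_lin c b] at h
  have h2 := (memLp_map_measure_iff (by fun_prop) (meas_lin c b).aemeasurable).1 h
  exact h2.integrable_sq

lemma val_sq {H : ℕ} (c : ℝ) (b : Fin H → ℝ) :
    ∫ u, (c + ∑ k, b k * u k) ^ 2 ∂(stdGaussianPi H) = c ^ 2 + ∑ k, b k ^ 2 := by
  have hm : AEMeasurable (fun u : Fin H → ℝ => c + ∑ k, b k * u k) (stdGaussianPi H) :=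
    (meas_lin c b).aemeasurable
  have h := integral_map hm (f := fun y : ℝ => y ^ 2) (by fun_prop)
  rw [← h, law_lin]
  have hv := variance_fun_id_gaussianReal (μ := c) (v := Real.toNNReal (∑ k, b k ^ 2))
  rw [variance_eq_sub (X := fun x : ℝ => x) (memLp_id_gaussianReal 2)] at hv
  rw [integral_id_gaussianReal, Real.coe_toNNReal _ (Finset.sum_nonneg fun k _ => sq_nonneg _)] at hv
  simp only [Pi.pow_apply] at hv
  linarith

lemma val_abs {H : ℕ} (c : ℝ) (b : Fin H → ℝ) (hb : 0 < ∑ k, b k ^ 2) :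
    ∫ u, |c + ∑ k, b k * u k| ∂(stdGaussianPi H)
      = Real.sqrt (∑ k, b k ^ 2) * Mfun (c / Real.sqrt (∑ k, b k ^ 2)) := by
  have hm : AEMeasurable (fun u : Fin H → ℝ => c + ∑ k, b k * u k) (stdGaussianPi H) :=
    (meas_lin c b).aemeasurable
  have h := integral_map hm (f := fun y : ℝ => |y|) (by fun_prop)
  rw [← h, law_lin]
  set v := ∑ k, b k ^ 2
  have hs : 0 < Real.sqrt v := Real.sqrt_pos.2 hb
  have e : gaussianReal c (Real.toNNReal v)
      = (gaussianReal 0 1).map (fun y => c + Real.sqrt v * y) := by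
    have h1 := gaussianReal_map_const_mul (μ := 0) (v := 1) (Real.sqrt v)
    have h2 := gaussianReal_map_const_add (μ := 0) (v := Real.toNNReal v) c
    have h3 : NNReal.mk (Real.sqrt v ^ 2) (sq_nonneg _) * 1 = Real.toNNReal v := by
      ext; simp [Real.sq_sqrt hb.le, hb.le]
    rw [h3, mul_zero] at h1
    rw [← h1, Measure.map_map (by fun_prop) (by fun_prop), zero_add] at h2
    exact h2.symm
  rw [e, integral_map (by fun_prop) (by fun_prop), ← std_abs, ← integral_const_mul]
  congr 1
  ext y
  rw [← abs_of_pos hs, ← abs_mul, abs_of_pos hs]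
  congr 1
  field_simp

lemma log_gauss {D H : ℕ} (W : Matrix (Fin D) (Fin H) ℝ) (s : ℝ) (hs : 0 < s)
    (x : Fin D → ℝ) (z : Fin H → ℝ) :
    Real.log (gaussObsPdf W s x z) = -(D : ℝ) / 2 * Real.log (2 * Real.pi * s)
      + ∑ i, -(1 / (2 * s)) * (x i - W.mulVec z i) ^ 2 := by
  unfold gaussObsPdf
  have : 0 < 2 * Real.pi * s := by positivity
  rw [Real.log_mul (Real.rpow_pos_of_pos this _).ne' (Real.exp_pos _).ne', Real.log_rpow this,
    Real.log_exp, ← Finset.mul_sum]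
  ring

lemma log_lap {H : ℕ} (l : Fin H → ℝ) (hl : ∀ h, 0 < l h) (z : Fin H → ℝ) :
    Real.log (laplacePdf l z) = ∑ h, (-Real.log (2 * l h) + -(1 / l h) * |z h|) := by
  unfold laplacePdf
  rw [Real.log_prod (fun h _ => by have := hl h; positivity)]
  refine Finset.sum_congr rfl fun h _ => ?_
  have := hl h
  rw [Real.log_mul (by positivity) (Real.exp_pos _).ne', Real.log_exp, one_div, Real.log_inv]
  ring

lemma trace_eq {D H : ℕ} (W : Matrix (Fin D) (Fin H) ℝ) (A : Matrix (Fin H) (Fin H) ℝ) :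
    Matrix.trace (Wᵀ * W * (A * Aᵀ)) = ∑ i, ∑ k, (-(W * A) i k) ^ 2 := by
  have : Matrix.trace (Wᵀ * W * (A * Aᵀ)) = Matrix.trace ((W * A) * (W * A)ᵀ) := by
    rw [Matrix.transpose_mul, Matrix.mul_assoc, Matrix.trace_mul_comm, ← Matrix.mul_assoc,
      ← Matrix.mul_assoc]
  rw [this]
  simp only [Matrix.trace, Matrix.diag, Matrix.mul_apply (M := W * A), Matrix.transpose_apply,
    sq, neg_mul_neg]

lemma elbo_int {D H : ℕ} (W : Matrix (Fin D) (Fin H) ℝ) (x : Fin D → ℝ) (ν : Fin H → ℝ)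
    (A T : Matrix (Fin H) (Fin H) ℝ) (hT : T = A * Aᵀ) (hTpos : ∀ h, 0 < T h h)
    (l : Fin H → ℝ) (s : ℝ) (hl : ∀ h, 0 < l h) (hs : 0 < s) :
    ∫ u : Fin H → ℝ, (Real.log (gaussObsPdf W s x (ν + A.mulVec u)) +
          Real.log (laplacePdf l (ν + A.mulVec u))) ∂(stdGaussianPi H)
    = -(D : ℝ) / 2 * Real.log (2 * Real.pi * s)
      + -(1 / (2 * s)) * (Matrix.trace (Wᵀ * W * T) + ∑ i, (W.mulVec ν i - x i) ^ 2)
      + ∑ h, (-Real.log (2 * l h)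
        + -(1 / l h) * (Real.sqrt (T h h) * Mfun (ν h / Real.sqrt (T h h)))) := by
  have : IsProbabilityMeasure (stdGaussianPi H) := by unfold stdGaussianPi; infer_instance
  have hTd : ∀ h, T h h = ∑ k, A h k ^ 2 := by
    intro h; rw [hT]; simp [Matrix.mul_apply, sq]
  have e1 : ∀ u i, x i - W.mulVec (ν + A.mulVec u) i
      = (x i - W.mulVec ν i) + ∑ k, (-(W * A) i k) * u k := by
    intro u i
    rw [Matrix.mulVec_add, Matrix.mulVec_mulVec, Pi.add_apply]
    have : (W * A).mulVec u i = ∑ k, (W * A) i k * u k := rfl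
    rw [this]
    simp only [neg_mul, Finset.sum_neg_distrib]
    ring
  have e2 : ∀ u h, (ν + A.mulVec u) h = ν h + ∑ k, A h k * u k := fun u h => rfl
  simp_rw [log_gauss W s hs, log_lap l hl, e1, e2]
  have i1 : ∀ i ∈ Finset.univ, Integrable (fun u : Fin H → ℝ =>
      -(1 / (2 * s)) * ((x i - W.mulVec ν i) + ∑ k, (-(W * A) i k) * u k) ^ 2)
      (stdGaussianPi H) := fun i _ => (int_sq _ _).const_mul _
  have i2' : ∀ h, Integrable (fun u : Fin H → ℝ => -(1 / l h) * |ν h + ∑ k, A h k * u k|)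
      (stdGaussianPi H) := fun h => (int_abs _ _).const_mul _
  have i2 : ∀ h ∈ Finset.univ, Integrable (fun u : Fin H → ℝ =>
      (-Real.log (2 * l h) + -(1 / l h) * |ν h + ∑ k, A h k * u k|))
      (stdGaussianPi H) := fun h _ => (integrable_const _).add (i2' h)
  have i3 : Integrable (fun u : Fin H → ℝ => -(D : ℝ) / 2 * Real.log (2 * Real.pi * s)
      + ∑ i, -(1 / (2 * s)) * ((x i - W.mulVec ν i) + ∑ k, (-(W * A) i k) * u k) ^ 2)
      (stdGaussianPi H) := (integrable_const _).add (integrable_finsetSum _ i1)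
  rw [integral_add i3
      (integrable_finsetSum _ i2),
    integral_add (integrable_const _) (integrable_finsetSum _ i1),
    integral_finsetSum _ i1, integral_finsetSum _ i2]
  congr 1
  · simp only [integral_const_mul, val_sq, integral_const, probReal_univ, one_smul]
    rw [hT, trace_eq, ← Finset.mul_sum, Finset.sum_add_distrib]
    have : ∀ i, (x i - W.mulVec ν i) ^ 2 = (W.mulVec ν i - x i) ^ 2 := fun i => by ring
    simp only [this]
    ring
  · refine Finset.sum_congr rfl fun h _ => ?_
    rw [integral_add (integrable_const _) (i2' h), integral_const_mul,
      val_abs _ _ (by rw [← hTd]; exact hTpos h), ← hTd]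
    simp

lemma deriv_aux (c m K t : ℝ) (ht : 0 < t) (hc : 0 < c) (d : ℝ) (hd : d ≠ 0) :
    deriv (fun t : ℝ => d * (-Real.log (c * t) + -(1 / t) * m) + K) t = 0 ↔ t = m := by
  have h1 : HasDerivAt (fun t : ℝ => Real.log (c * t)) (c / (c * t)) t := by
    have := ((hasDerivAt_id t).const_mul c).log (by simp; exact ⟨hc.ne', ht.ne'⟩)
    simpa using this
  have h2 : HasDerivAt (fun t : ℝ => 1 / t) (-(t ^ 2)⁻¹) t := by
    simpa using hasDerivAt_inv ht.ne'
  have h3 := ((h1.neg.add (h2.neg.mul_const m)).const_mul d).add_const K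
  have h4 : deriv (fun t : ℝ => d * (-Real.log (c * t) + -(1 / t) * m) + K) t = _ := h3.deriv
  rw [h4]
  have : d * (-(c / (c * t)) + - -(t ^ 2)⁻¹ * m) = d * (m - t) / t ^ 2 := by
    field_simp
    ring
  rw [this, div_eq_zero_iff]
  have : t ^ 2 ≠ 0 := by positivity
  simp [hd, this, sub_eq_zero, eq_comm]

/-- **Theorem 2 (optimal scales and variance).**
For Gaussian variational distributions `q_n = N(nu_n, T_n)` realized as the laws of
`nu_n + A_n u` with `u` standard Gaussian and `T_n = A_n A_n^T` having positive diagonal,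
the values `sigma2opt` and `lamopt` given by the stated analytic formulas are the unique
values of `sigma^2 > 0` and `lam` in `(0, +inf)^H` at which all partial derivatives of
the ELBO with respect to `sigma^2` and the `lam_h` vanish.  Here `Hq` is the
`(lam, sigma^2)`-independent entropy contribution `-(1/N) * sum_n int q_n log q_n`
of the ELBO. -/
theorem optimal_scales_and_variance
    (N D H : ℕ) (hN : 0 < N) (hD : 0 < D)
    (x : Fin N → Fin D → ℝ) (W : Matrix (Fin D) (Fin H) ℝ)
    (ν : Fin N → Fin H → ℝ) (A : Fin N → Matrix (Fin H) (Fin H) ℝ)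
    (T : Fin N → Matrix (Fin H) (Fin H) ℝ) (hT : ∀ n, T n = A n * (A n)ᵀ)
    (hTpos : ∀ n h, 0 < T n h h)
    (Hq : ℝ)
    (ELBO : (Fin H → ℝ) → ℝ → ℝ)
    (hELBO : ∀ l s, ELBO l s = (1 / N : ℝ) * ∑ n, (∫ u : Fin H → ℝ,
        (Real.log (gaussObsPdf W s (x n) (ν n + (A n).mulVec u)) +
          Real.log (laplacePdf l (ν n + (A n).mulVec u))) ∂(stdGaussianPi H)) + Hq)
    (σ2opt : ℝ)
    (hσ2opt : σ2opt = (1 / (N * D) : ℝ) * ∑ n,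
      (Matrix.trace (Wᵀ * W * T n) + ∑ i, (W.mulVec (ν n) i - x n i) ^ 2))
    (lamopt : Fin H → ℝ)
    (hlamopt : ∀ h, lamopt h = (1 / N : ℝ) * ∑ n,
      Real.sqrt (T n h h) * Mfun (ν n h / Real.sqrt (T n h h))) :
    ∀ (l : Fin H → ℝ) (s : ℝ), (∀ h, 0 < l h) → 0 < s →
      (((∀ h, deriv (fun t : ℝ => ELBO (Function.update l h t) s) (l h) = 0) ∧
          deriv (fun t : ℝ => ELBO l t) s = 0) ↔
        (l = lamopt ∧ s = σ2opt)) := by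
  have hN' : (N : ℝ) ≠ 0 := by positivity
  have hD' : (D : ℝ) ≠ 0 := by positivity
  have key : ∀ l s, (∀ h, 0 < l h) → 0 < s → ELBO l s
      = (D : ℝ) / 2 * (-Real.log (2 * Real.pi * s) + -(1 / s) * σ2opt)
        + ∑ h, (-Real.log (2 * l h) + -(1 / l h) * lamopt h) + Hq := by
    intro l s hl hs
    rw [hELBO]
    simp_rw [fun n => elbo_int W (x n) (ν n) (A n) (T n) (hT n) (hTpos n) l s hl hs]
    rw [Finset.sum_add_distrib, Finset.sum_add_distrib, ← Finset.mul_sum, Finset.sum_comm]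
    simp_rw [Finset.sum_add_distrib (f := fun _ : Fin N => -Real.log _), ← Finset.mul_sum]
    have hl' : ∀ h, ∑ n, Real.sqrt (T n h h) * Mfun (ν n h / Real.sqrt (T n h h))
        = N * lamopt h := fun h => by rw [hlamopt]; field_simp
    have hs' : ∑ n, (Matrix.trace (Wᵀ * W * T n) + ∑ i, (W.mulVec (ν n) i - x n i) ^ 2)
        = N * D * σ2opt := by rw [hσ2opt]; field_simp
    simp_rw [hl', hs']
    simp only [Finset.sum_const, Finset.card_univ, Fintype.card_fin, nsmul_eq_mul]
    rw [mul_add, Finset.mul_sum]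
    congr 2
    · field_simp
    · refine Finset.sum_congr rfl fun h _ => ?_
      field_simp
  intro l s hl hs
  have hder : ∀ h, deriv (fun t : ℝ => ELBO (Function.update l h t) s) (l h) = 0
      ↔ l h = lamopt h := by
    intro h
    rw [← deriv_aux 2 (lamopt h)
      ((D : ℝ) / 2 * (-Real.log (2 * Real.pi * s) + -(1 / s) * σ2opt)
        + ∑ k ∈ Finset.univ.erase h, (-Real.log (2 * l k) + -(1 / l k) * lamopt k) + Hq)
      (l h) (hl h) two_pos 1 one_ne_zero]
    rw [Filter.EventuallyEq.deriv_eq]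
    filter_upwards [lt_mem_nhds (hl h)] with t ht
    rw [key _ s _ hs, ← Finset.add_sum_erase _ _ (Finset.mem_univ h)]
    · have : ∀ k ∈ Finset.univ.erase h, (-Real.log (2 * Function.update l h t k)
          + -(1 / Function.update l h t k) * lamopt k)
          = (-Real.log (2 * l k) + -(1 / l k) * lamopt k) := by
        intro k hk
        rw [Function.update_of_ne (Finset.ne_of_mem_erase hk)]
      rw [Finset.sum_congr rfl this, Function.update_self]
      ring
    · intro k
      by_cases hk : k = h
      · subst hk; simpa using ht
      · rw [Function.update_of_ne hk]; exact hl k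
  have hders : deriv (fun t : ℝ => ELBO l t) s = 0 ↔ s = σ2opt := by
    rw [← deriv_aux (2 * Real.pi) σ2opt
      (∑ h, (-Real.log (2 * l h) + -(1 / l h) * lamopt h) + Hq) s hs (by positivity)
      ((D : ℝ) / 2) (by positivity)]
    rw [Filter.EventuallyEq.deriv_eq]
    filter_upwards [lt_mem_nhds hs] with t ht
    rw [key l t hl ht, add_assoc]
  rw [hders, funext_iff]
  simp_rw [hder]
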